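/- arXiv:2311.01748 — 2 statements merged into one kernel-verified Lean document; each statement's English description precedes it below -/
import Mathlib

section
/- Let 0 < α < 1 and z ≥ 1 − α. Let ρ, σ₁, σ₂ be n×n positive semidefinite complex matrices with σ₁ ≤ σ₂ in the Loewner order. Then Q_{α,z}(ρ‖σ₁) ≤ Q_{α,z}(ρ‖σ₂). -/
open Matrix
open scoped ComplexOrder

/-- Real power of a positive semidefinite matrix via the spectral decomposition,
applying `x ^ t` (real `rpow`, so with the convention `0 ^ t = 0` for `t ≠ 0`)
to the eigenvalues; returns `0` if the matrix is not Hermitian. -/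
noncomputable def mpow {n : Type*} [Fintype n] [DecidableEq n]
    (A : Matrix n n ℂ) (t : ℝ) : Matrix n n ℂ :=
  if hA : A.IsHermitian then
    (hA.eigenvectorUnitary : Matrix n n ℂ) *
      Matrix.diagonal (fun i => ((hA.eigenvalues i ^ t : ℝ) : ℂ)) *
      star (hA.eigenvectorUnitary : Matrix n n ℂ)
  else 0


/-- The α-z-Rényi quantity `Q_{α,z}(ρ‖σ) = Tr((σ^((1−α)/2z) ρ^(α/z) σ^((1−α)/2z))^z)`. -/
noncomputable def Qaz {n : Type*} [Fintype n] [DecidableEq n]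
    (α z : ℝ) (ρ σ : Matrix n n ℂ) : ℝ :=
  ((mpow (mpow σ ((1 - α) / (2 * z)) * mpow ρ (α / z) * mpow σ ((1 - α) / (2 * z))) z).trace).re

/-! The quantity `Q_{α,z}(ρ‖σ)` is `Tr((XᴴX)^z)` for `X = ρ^(α/2z) σ^((1−α)/2z)`. Since `XᴴX` and
`XXᴴ` have the same characteristic polynomial, it is also `Tr((XXᴴ)^z)`, and in
`XXᴴ = ρ^(α/2z) σ^((1−α)/z) ρ^(α/2z)` the matrix `σ` enters only through the power `σ^((1−α)/z)`.
Its exponent lies in `[0, 1]`, so by the Löwner–Heinz inequality `XXᴴ` is monotone in `σ`. By Weyl's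
monotonicity principle each ordered eigenvalue of `XXᴴ` is then monotone in `σ`, and so is the
trace of any nondecreasing function of `XXᴴ`. -/

section Weyl

open Module Submodule

theorem finrank_span_image_eq_card {ι R M : Type*} [Ring R] [StrongRankCondition R]
    [AddCommGroup M] [Module R M] {v : ι → M} {s : Finset ι} (hv : LinearIndepOn R v s) :
    finrank R (span R (v '' s)) = s.card := by
  have := nontrivial_of_invariantBasisNumber R
  rw [Set.image_eq_range]
  exact (finrank_span_eq_card hv).trans (Fintype.card_coe s)

theorem exists_ne_zero_mem_span_image_Iic_and_Ici {K V : Type*} [DivisionRing K] [AddCommGroup V]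
    [Module K V] {n : ℕ} (b c : Basis (Fin n) K V) (i : Fin n) :
    ∃ x ≠ 0, x ∈ span K (b '' Set.Iic i) ∧ x ∈ span K (c '' Set.Ici i) := by
  have := b.finiteDimensional_of_finite
  have hb : finrank K (span K (b '' Set.Iic i)) = i + 1 := by
    rw [← Finset.coe_Iic, finrank_span_image_eq_card (b.linearIndependent.linearIndepOn _),
      Fin.card_Iic]
  have hc : finrank K (span K (c '' Set.Ici i)) = n - i := by
    rw [← Finset.coe_Ici, finrank_span_image_eq_card (c.linearIndependent.linearIndepOn _),
      Fin.card_Ici]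
  have hV : finrank K V = n := by rw [finrank_eq_card_basis b, Fintype.card_fin]
  by_contra! h
  have hdisj : Disjoint (span K (b '' Set.Iic i)) (span K (c '' Set.Ici i)) :=
    disjoint_def.mpr fun x hxb hxc => by_contra fun hx => h x hx hxb hxc
  have hle := finrank_add_finrank_le_of_disjoint hdisj
  omega

variable {𝕜 E : Type*} [RCLike 𝕜] [NormedAddCommGroup E] [InnerProductSpace 𝕜 E]

theorem inner_eq_zero_of_mem_span_image {ι : Type*} {v : ι → E} (hv : Orthonormal 𝕜 v) {s : Set ι}
    {x : E} (hx : x ∈ span 𝕜 (v '' s)) {j : ι} (hj : j ∉ s) : inner 𝕜 (v j) x = 0 := by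
  have hle : span 𝕜 (v '' s) ≤ LinearMap.ker (innerₛₗ 𝕜 (v j)) := by
    rw [span_le]
    rintro _ ⟨k, hk, rfl⟩
    exact hv.inner_eq_zero (ne_of_mem_of_not_mem hk hj).symm
  exact hle hx

variable [FiniteDimensional 𝕜 E] {n : ℕ} {T S : E →ₗ[𝕜] E}

theorem re_inner_map_self_eq_sum_eigenvalues (hT : T.IsSymmetric) (hn : finrank 𝕜 E = n) (x : E) :
    RCLike.re (inner 𝕜 (T x) x) =
      ∑ j, hT.eigenvalues hn j * ‖inner 𝕜 (hT.eigenvectorBasis hn j) x‖ ^ 2 := by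
  rw [← (hT.eigenvectorBasis hn).sum_inner_mul_inner, map_sum]
  refine Finset.sum_congr rfl fun j _ => ?_
  rw [hT, hT.apply_eigenvectorBasis, inner_smul_right, mul_assoc, RCLike.re_ofReal_mul,
    inner_mul_symm_re_eq_norm, norm_mul, norm_inner_symm x, sq]

theorem eigenvalues_mul_norm_sq_le_re_inner_map_self (hT : T.IsSymmetric) (hn : finrank 𝕜 E = n)
    {i : Fin n} {x : E} (hx : x ∈ span 𝕜 (hT.eigenvectorBasis hn '' Set.Iic i)) :
    hT.eigenvalues hn i * ‖x‖ ^ 2 ≤ RCLike.re (inner 𝕜 (T x) x) := by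
  rw [re_inner_map_self_eq_sum_eigenvalues hT hn,
    ← (hT.eigenvectorBasis hn).sum_sq_norm_inner_right, Finset.mul_sum]
  refine Finset.sum_le_sum fun j _ => ?_
  by_cases hj : j ≤ i
  · gcongr
    exact hT.eigenvalues_antitone hn hj
  · simp [inner_eq_zero_of_mem_span_image (hT.eigenvectorBasis hn).orthonormal hx hj]

theorem re_inner_map_self_le_eigenvalues_mul_norm_sq (hT : T.IsSymmetric) (hn : finrank 𝕜 E = n)
    {i : Fin n} {x : E} (hx : x ∈ span 𝕜 (hT.eigenvectorBasis hn '' Set.Ici i)) :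
    RCLike.re (inner 𝕜 (T x) x) ≤ hT.eigenvalues hn i * ‖x‖ ^ 2 := by
  rw [re_inner_map_self_eq_sum_eigenvalues hT hn,
    ← (hT.eigenvectorBasis hn).sum_sq_norm_inner_right, Finset.mul_sum]
  refine Finset.sum_le_sum fun j _ => ?_
  by_cases hj : i ≤ j
  · gcongr
    exact hT.eigenvalues_antitone hn hj
  · simp [inner_eq_zero_of_mem_span_image (hT.eigenvectorBasis hn).orthonormal hx hj]

theorem isSymmetric_eigenvalues_mono (hT : T.IsSymmetric) (hS : S.IsSymmetric)
    (hn : finrank 𝕜 E = n) (hTS : T ≤ S) (i : Fin n) :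
    hT.eigenvalues hn i ≤ hS.eigenvalues hn i := by
  obtain ⟨x, hx, hxT, hxS⟩ := exists_ne_zero_mem_span_image_Iic_and_Ici
    (hT.eigenvectorBasis hn).toBasis (hS.eigenvectorBasis hn).toBasis i
  rw [OrthonormalBasis.coe_toBasis] at hxT hxS
  have hTSx : RCLike.re (inner 𝕜 (T x) x) ≤ RCLike.re (inner 𝕜 (S x) x) := by
    have h := ((LinearMap.le_def T S).mp hTS).re_inner_nonneg_left x
    rwa [LinearMap.sub_apply, inner_sub_left, map_sub, sub_nonneg] at h
  refine le_of_mul_le_mul_right ?_ (by positivity : 0 < ‖x‖ ^ 2)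
  calc hT.eigenvalues hn i * ‖x‖ ^ 2
      ≤ RCLike.re (inner 𝕜 (T x) x) := eigenvalues_mul_norm_sq_le_re_inner_map_self hT hn hxT
    _ ≤ RCLike.re (inner 𝕜 (S x) x) := hTSx
    _ ≤ hS.eigenvalues hn i * ‖x‖ ^ 2 := re_inner_map_self_le_eigenvalues_mul_norm_sq hS hn hxS

end Weyl

section TraceCFC

open scoped MatrixOrder

variable {n 𝕜 : Type*} [Fintype n] [DecidableEq n] [RCLike 𝕜] {A B : Matrix n n 𝕜}

theorem isHermitian_eigenvalues_mono (hA : A.IsHermitian) (hB : B.IsHermitian)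
    (hAB : A ≤ B) (i : n) : hA.eigenvalues i ≤ hB.eigenvalues i := by
  refine isSymmetric_eigenvalues_mono _ _ _ ?_ _
  rwa [LinearMap.le_def, ← map_sub, Matrix.isPositive_toEuclideanLin_iff, ← Matrix.le_iff]

theorem trace_cfc (hA : A.IsHermitian) (f : ℝ → ℝ) :
    (cfc f A).trace = ∑ i, (f (hA.eigenvalues i) : 𝕜) := by
  rw [hA.cfc_eq, IsHermitian.cfc, Unitary.conjStarAlgAut_apply, trace_mul_cycle,
    Unitary.coe_star_mul_self, one_mul, trace_diagonal]
  rfl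

theorem trace_cfc_conjTranspose_mul_self (f : ℝ → ℝ) (X : Matrix n n 𝕜) :
    (cfc f (Xᴴ * X)).trace = (cfc f (X * Xᴴ)).trace := by
  have heig : (isHermitian_conjTranspose_mul_self X).eigenvalues =
      (isHermitian_mul_conjTranspose_self X).eigenvalues :=
    (IsHermitian.eigenvalues_eq_eigenvalues_iff _ _).mpr (charpoly_mul_comm _ _)
  rw [trace_cfc (isHermitian_conjTranspose_mul_self X),
    trace_cfc (isHermitian_mul_conjTranspose_self X), heig]

theorem trace_cfc_le_trace_cfc (hA : A.IsHermitian) (hAB : A ≤ B) {f : ℝ → ℝ}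
    (hf : MonotoneOn f (spectrum ℝ A ∪ spectrum ℝ B)) : (cfc f A).trace ≤ (cfc f B).trace := by
  have hB : B.IsHermitian := by simpa using hA.add (Matrix.le_iff.mp hAB).isHermitian
  rw [trace_cfc hA, trace_cfc hB]
  exact Finset.sum_le_sum fun i _ => RCLike.ofReal_le_ofReal.mpr <|
    hf (.inl (hA.eigenvalues_mem_spectrum_real i)) (.inr (hB.eigenvalues_mem_spectrum_real i))
      (isHermitian_eigenvalues_mono hA hB hAB i)

end TraceCFC

section Mpow

open scoped MatrixOrder

variable {n : Type*} [Fintype n] [DecidableEq n] {A B : Matrix n n ℂ}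

theorem mpow_eq_cfc (hA : A.IsHermitian) (t : ℝ) : mpow A t = cfc (fun x : ℝ => x ^ t) A := by
  rw [hA.cfc_eq, mpow, dif_pos hA]
  rfl

theorem mpow_nonneg (hA : 0 ≤ A) (t : ℝ) : 0 ≤ mpow A t := by
  rw [mpow_eq_cfc hA.posSemidef.isHermitian]
  exact cfc_nonneg fun x hx => Real.rpow_nonneg (spectrum_nonneg_of_nonneg hA hx) t

theorem mpow_half_mul_mpow_half (hA : 0 ≤ A) (t : ℝ) :
    mpow A (t / 2) * mpow A (t / 2) = mpow A t := by
  have hcont : ContinuousOn (fun x : ℝ => x ^ (t / 2)) (spectrum ℝ A) :=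
    finite_real_spectrum.continuousOn _
  simp only [mpow_eq_cfc hA.posSemidef.isHermitian]
  rw [← cfc_mul _ _ A hcont hcont]
  refine cfc_congr fun x hx => ?_
  have hx0 : 0 ≤ x := spectrum_nonneg_of_nonneg hA hx
  calc x ^ (t / 2) * x ^ (t / 2) = (x ^ (t / 2)) ^ 2 := (sq _).symm
    _ = x ^ (t / 2 * (2 : ℕ)) := (Real.rpow_mul_natCast hx0 _ _).symm
    _ = x ^ t := by simp

open scoped Matrix.Norms.L2Operator in
theorem mpow_le_mpow (hA : 0 ≤ A) (hAB : A ≤ B) {p : ℝ} (hp : p ∈ Set.Icc 0 1) :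
    mpow A p ≤ mpow B p := by
  have hB : 0 ≤ B := hA.trans hAB
  rw [mpow_eq_cfc hA.posSemidef.isHermitian, mpow_eq_cfc hB.posSemidef.isHermitian,
    ← CFC.rpow_eq_cfc_real hA, ← CFC.rpow_eq_cfc_real hB]
  exact CFC.rpow_le_rpow hp hAB

theorem trace_mpow_le_trace_mpow (hA : 0 ≤ A) (hAB : A ≤ B) {z : ℝ} (hz : 0 ≤ z) :
    (mpow A z).trace ≤ (mpow B z).trace := by
  have hB : 0 ≤ B := hA.trans hAB
  rw [mpow_eq_cfc hA.posSemidef.isHermitian, mpow_eq_cfc hB.posSemidef.isHermitian]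
  refine trace_cfc_le_trace_cfc hA.posSemidef.isHermitian hAB <|
    (Real.monotoneOn_rpow_Ici_of_exponent_nonneg hz).mono <| Set.union_subset ?_ ?_
  · exact fun x hx => spectrum_nonneg_of_nonneg hA hx
  · exact fun x hx => spectrum_nonneg_of_nonneg hB hx

end Mpow

section Renyi

open scoped MatrixOrder

variable {n : Type*} [Fintype n] [DecidableEq n]

theorem Qaz_eq_re_trace_mpow {ρ σ : Matrix n n ℂ} (hρ : 0 ≤ ρ) (hσ : 0 ≤ σ) (α z : ℝ) :
    Qaz α z ρ σ = (mpow (mpow ρ (α / (2 * z)) * mpow σ ((1 - α) / z) *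
      mpow ρ (α / (2 * z))) z).trace.re := by
  set R := mpow ρ (α / (2 * z)) with hR
  set S := mpow σ ((1 - α) / (2 * z)) with hS
  have hRH : Rᴴ = R := (mpow_nonneg hρ _).posSemidef.isHermitian
  have hSH : Sᴴ = S := (mpow_nonneg hσ _).posSemidef.isHermitian
  have hRR : mpow ρ (α / z) = R * R := by
    rw [hR, ← mpow_half_mul_mpow_half hρ, div_div, mul_comm z]
  have hSS : mpow σ ((1 - α) / z) = S * S := by
    rw [hS, ← mpow_half_mul_mpow_half hσ, div_div, mul_comm z]
  have hXX : S * mpow ρ (α / z) * S = (R * S)ᴴ * (R * S) := by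
    rw [hRR, conjTranspose_mul, hRH, hSH]
    simp only [mul_assoc]
  have hXX' : R * mpow σ ((1 - α) / z) * R = R * S * (R * S)ᴴ := by
    rw [hSS, conjTranspose_mul, hRH, hSH]
    simp only [mul_assoc]
  rw [Qaz, ← hS, hXX, hXX', mpow_eq_cfc (isHermitian_conjTranspose_mul_self _),
    mpow_eq_cfc (isHermitian_mul_conjTranspose_self _), trace_cfc_conjTranspose_mul_self]

theorem Qaz_mono_right_general {α z : ℝ} (hα1 : α < 1) (hz : 1 - α ≤ z) {ρ σ₁ σ₂ : Matrix n n ℂ}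
    (hρ : ρ.PosSemidef) (hσ₁ : σ₁.PosSemidef) (hle : (σ₂ - σ₁).PosSemidef) :
    Qaz α z ρ σ₁ ≤ Qaz α z ρ σ₂ := by
  have hz0 : 0 < z := (sub_pos.mpr hα1).trans_le hz
  have hexp : (1 - α) / z ∈ Set.Icc 0 1 :=
    ⟨div_nonneg (sub_pos.mpr hα1).le hz0.le, (div_le_one hz0).mpr hz⟩
  have hσ : σ₁ ≤ σ₂ := Matrix.le_iff.mpr hle
  have hR : 0 ≤ mpow ρ (α / (2 * z)) := mpow_nonneg hρ.nonneg _
  rw [Qaz_eq_re_trace_mpow hρ.nonneg hσ₁.nonneg,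
    Qaz_eq_re_trace_mpow hρ.nonneg (hσ₁.nonneg.trans hσ)]
  refine (Complex.le_def.mp (trace_mpow_le_trace_mpow ?_ ?_ hz0.le)).1
  · exact conjugate_nonneg_of_nonneg (mpow_nonneg hσ₁.nonneg _) hR
  · exact conjugate_le_conjugate_of_nonneg (mpow_le_mpow hσ₁.nonneg hσ hexp) hR

end Renyi

/-- For `0 < α < 1` and `z ≥ 1 − α`, `Q_{α,z}(ρ‖·)` is monotone in the second
argument with respect to the Loewner order. -/
theorem Qaz_mono_right (n : ℕ) (α z : ℝ) (hα0 : 0 < α) (hα1 : α < 1) (hz : 1 - α ≤ z)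
    (ρ σ₁ σ₂ : Matrix (Fin n) (Fin n) ℂ)
    (hρ : ρ.PosSemidef) (hσ₁ : σ₁.PosSemidef) (hσ₂ : σ₂.PosSemidef)
    (hle : (σ₂ - σ₁).PosSemidef) :
    Qaz α z ρ σ₁ ≤ Qaz α z ρ σ₂ :=
  Qaz_mono_right_general hα1 hz hρ hσ₁ hle
end

section
/- Let 0 < α < 1 and z ≥ max{α, 1 − α}, and let ρ, σ be n×n positive semidefinite complex matrices. Then Q_{α,z}(ρ‖σ) equals the infimum, over all positive definite n×n complex matrices a, of α · Tr((a^{1/2} ρ^{α/z} a^{1/2})^{z/α}) + (1 − α) · Tr((a^{−1/2} σ^{(1−α)/z} a^{−1/2})^{z/(1−α)}), where a^{−1/2} is the inverse of the positive definite square root of a. -/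
open Matrix
open scoped ComplexOrder

/-!
Write `A = ρ^{α/z}`, `B = σ^{(1-α)/z}` and `M = B^{1/2} A B^{1/2}`. For `X = a^{1/2} A a^{1/2}` and
`Y = a^{-1/2} B a^{-1/2}` the products `X Y` and `A B` have the same spectrum, so the lower bound is
the trace Young inequality
`Tr (Y^{1/2} X Y^{1/2})^z ≤ α Tr X^{z/α} + (1 - α) Tr Y^{z/(1-α)}`. With `K = P^{1-α}` for
`P = Y^{1/2} X Y^{1/2}`, it follows by weighting `(K - Y) Y⁻¹ (K - Y) ≥ 0` with `P^{z-1+α}` and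
applying the scalar Young inequality, in the eigenbases of the two factors, to each of the two
resulting traces.

For positive definite `A` and `B` the value is attained at `a = B^{1/2} M^{α-1} B^{1/2}`, which
makes the spectra of `X` and `Y` those of `M^α` and `M^{1-α}`. In general, replace `A` and `B` by
`A + ε` and `B + ε`: the objective only increases, and its minimum tends to `Tr M^z`.
-/

open CFC (conjSqrt)
open Filter Topology
open scoped MatrixOrder

section RpowConjSqrt

lemma rpow_add_of_exponent_nonneg {A : Type*} [PartialOrder A] [Ring A] [StarRing A]
    [TopologicalSpace A] [StarOrderedRing A] [Algebra ℝ A]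
    [ContinuousFunctionalCalculus ℝ A IsSelfAdjoint] [NonnegSpectrumClass ℝ A]
    [IsSemitopologicalRing A] [T2Space A] (a : A) {s t : ℝ}
    (hs : 0 ≤ s) (ht : 0 ≤ t) : a ^ (s + t) = a ^ s * a ^ t := by
  simp only [CFC.rpow_def]
  rw [← cfc_mul (fun x : NNReal => x ^ s) (fun x => x ^ t) a]
  exact cfc_congr fun x _ => NNReal.rpow_add_of_nonneg x hs ht

variable {n 𝕜 : Type*} [Fintype n] [DecidableEq n] [RCLike 𝕜]

lemma posSemidef_rpow (A : Matrix n n 𝕜) (t : ℝ) : (A ^ t).PosSemidef :=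
  CFC.rpow_nonneg.posSemidef

lemma posDef_rpow {A : Matrix n n 𝕜} (hA : A.PosDef) (t : ℝ) : (A ^ t).PosDef :=
  (hA.isStrictlyPositive.rpow A t).posDef

lemma inv_rpow_eq_rpow_neg {A : Matrix n n 𝕜} (hA : A.PosDef) (t : ℝ) : (A ^ t)⁻¹ = A ^ (-t) :=
  Matrix.inv_eq_right_inv (CFC.rpow_mul_rpow_neg t hA.isStrictlyPositive)

lemma posSemidef_conjSqrt (B : Matrix n n 𝕜) {A : Matrix n n 𝕜} (hA : A.PosSemidef) :
    (conjSqrt B A).PosSemidef := by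
  have h := CFC.conjSqrt_le_conjSqrt (c := B) hA.nonneg
  rw [map_zero] at h
  exact h.posSemidef

lemma posDef_conjSqrt {A B : Matrix n n 𝕜} (hB : B.PosDef) (hA : A.PosDef) :
    (conjSqrt B A).PosDef :=
  ((CFC.isStrictlyPositive_conjSqrt_iff B A hB.isStrictlyPositive).2 hA.isStrictlyPositive).posDef

lemma inv_conjSqrt {B : Matrix n n 𝕜} (hB : B.PosDef) (A : Matrix n n 𝕜) :
    (conjSqrt B A)⁻¹ = conjSqrt B⁻¹ A⁻¹ := by
  simp only [Matrix.nonsing_inv_eq_ringInverse]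
  exact CFC.ringInverse_conjSqrt B A hB.isStrictlyPositive

lemma conjSqrt_inv_conjSqrt {B : Matrix n n 𝕜} (A : Matrix n n 𝕜) (hB : B.PosDef) :
    conjSqrt B⁻¹ (conjSqrt B A) = A := by
  rw [Matrix.nonsing_inv_eq_ringInverse,
    CFC.conjSqrt_ringInverse_conjSqrt B A hB.isStrictlyPositive]

lemma conjSqrt_conjSqrt_inv {B : Matrix n n 𝕜} (A : Matrix n n 𝕜) (hB : B.PosDef) :
    conjSqrt B (conjSqrt B⁻¹ A) = A := by
  rw [Matrix.nonsing_inv_eq_ringInverse,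
    CFC.conjSqrt_conjSqrt_ringInverse B A hB.isStrictlyPositive]

lemma charpoly_conjSqrt {B : Matrix n n 𝕜} (hB : B.PosSemidef) (A : Matrix n n 𝕜) :
    (conjSqrt B A).charpoly = (A * B).charpoly := by
  rw [CFC.conjSqrt_apply, mul_assoc, Matrix.charpoly_mul_comm, mul_assoc,
    CFC.sqrt_mul_sqrt_self B hB.nonneg]

lemma charpoly_conjSqrt_comm {A B : Matrix n n 𝕜} (hA : A.PosSemidef) (hB : B.PosSemidef) :
    (conjSqrt A B).charpoly = (conjSqrt B A).charpoly := by
  rw [charpoly_conjSqrt hA, charpoly_conjSqrt hB, Matrix.charpoly_mul_comm]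

lemma charpoly_mul_conjSqrt (A B C : Matrix n n 𝕜) :
    (A * conjSqrt B C).charpoly = (conjSqrt B A * C).charpoly := by
  rw [CFC.conjSqrt_apply, CFC.conjSqrt_apply, ← mul_assoc, Matrix.charpoly_mul_comm]
  simp only [mul_assoc]

end RpowConjSqrt

section TraceInequalities

lemma re_trace_mul_nonneg {n 𝕜 : Type*} [Fintype n] [RCLike 𝕜] {A B : Matrix n n 𝕜}
    (hA : A.PosSemidef) (hB : B.PosSemidef) : 0 ≤ RCLike.re (A * B).trace := by
  classical
  have h : (conjSqrt A B).trace = (A * B).trace := by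
    rw [CFC.conjSqrt_apply, Matrix.trace_mul_cycle, CFC.sqrt_mul_sqrt_self A hA.nonneg]
  rw [← h]
  exact (RCLike.nonneg_iff.1 (posSemidef_conjSqrt A hB).trace_nonneg).1

variable {n 𝕜 : Type*} [Fintype n] [DecidableEq n] [RCLike 𝕜]

/-- The squared modulus `|⟨uᵢ, vⱼ⟩|²` of the inner product of the `i`-th eigenvector of `A` with the
`j`-th eigenvector of `B`. Traces of products of functions of `A` and of `B` are weighted sums with
these weights. -/
noncomputable def eigenOverlap {A B : Matrix n n 𝕜} (hA : A.IsHermitian) (hB : B.IsHermitian)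
    (i j : n) : ℝ :=
  ‖(star (hA.eigenvectorUnitary : Matrix n n 𝕜) * hB.eigenvectorUnitary : Matrix n n 𝕜) i j‖ ^ 2

lemma re_trace_cfc_mul_cfc {A B : Matrix n n 𝕜} (hA : A.IsHermitian) (hB : B.IsHermitian)
    (f g : ℝ → ℝ) :
    RCLike.re (cfc f A * cfc g B).trace =
      ∑ i, ∑ j, eigenOverlap hA hB i j * (f (hA.eigenvalues i) * g (hB.eigenvalues j)) := by
  set U : Matrix n n 𝕜 := (hA.eigenvectorUnitary : Matrix n n 𝕜)
  set V : Matrix n n 𝕜 := (hB.eigenvectorUnitary : Matrix n n 𝕜)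
  set D : Matrix n n 𝕜 := diagonal (RCLike.ofReal ∘ f ∘ hA.eigenvalues)
  set E : Matrix n n 𝕜 := diagonal (RCLike.ofReal ∘ g ∘ hB.eigenvalues)
  have hf : cfc f A = U * D * star U := by
    rw [hA.cfc_eq, Matrix.IsHermitian.cfc, Unitary.conjStarAlgAut_apply]
  have hg : cfc g B = V * E * star V := by
    rw [hB.cfc_eq, Matrix.IsHermitian.cfc, Unitary.conjStarAlgAut_apply]
  have hcycle : (cfc f A * cfc g B).trace = (D * (star U * V) * (E * star (star U * V))).trace := by
    rw [hf, hg, star_mul, star_star]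
    simp only [mul_assoc]
    rw [Matrix.trace_mul_comm]
    simp only [mul_assoc]
  rw [hcycle, Matrix.trace, map_sum]
  refine Finset.sum_congr rfl fun i _ => ?_
  rw [diag_apply, Matrix.mul_apply, map_sum]
  refine Finset.sum_congr rfl fun j _ => ?_
  rw [Matrix.diagonal_mul, Matrix.diagonal_mul, star_apply, eigenOverlap, ← RCLike.normSq_eq_def',
    RCLike.normSq_apply]
  simp only [Function.comp_apply, RCLike.star_def, RCLike.mul_re, RCLike.mul_im, RCLike.ofReal_re,
    RCLike.ofReal_im, RCLike.conj_re, RCLike.conj_im, zero_mul, sub_zero, mul_neg, neg_zero,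
    add_zero, sub_neg_eq_add]
  ring

lemma re_trace_cfc_mul_cfc_le {A B : Matrix n n 𝕜} (hA : A.IsHermitian) (hB : B.IsHermitian)
    {f₁ f₂ g₁ g₂ : ℝ → ℝ} {a b : ℝ}
    (h : ∀ x ∈ spectrum ℝ A, ∀ y ∈ spectrum ℝ B, f₁ x * g₁ y ≤ a * f₂ x + b * g₂ y) :
    RCLike.re (cfc f₁ A * cfc g₁ B).trace ≤
      a * RCLike.re (cfc f₂ A).trace + b * RCLike.re (cfc g₂ B).trace := by
  have hone {C : Matrix n n 𝕜} (hC : C.IsHermitian) : cfc (fun _ : ℝ => (1 : ℝ)) C = 1 :=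
    cfc_const_one ℝ C hC
  rw [← mul_one (cfc f₂ A), ← hone hB, ← one_mul (cfc g₂ B), ← hone hA]
  simp only [re_trace_cfc_mul_cfc hA hB, Finset.mul_sum, ← Finset.sum_add_distrib]
  refine Finset.sum_le_sum fun i _ => Finset.sum_le_sum fun j _ => ?_
  have hoverlap : 0 ≤ eigenOverlap hA hB i j := sq_nonneg _
  have hij := mul_le_mul_of_nonneg_left
    (h _ (hA.eigenvalues_mem_spectrum_real i) _ (hB.eigenvalues_mem_spectrum_real j)) hoverlap
  linarith

/-- The trace `Tr Aᵗ` of a real power of a positive semidefinite matrix, as a real number.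
The power is Mathlib's `CFC.rpow`, so `0 ^ 0 = 1`, and `A ^ t = 0` when `A` is not
positive semidefinite. -/
noncomputable def traceRPow (A : Matrix n n 𝕜) (t : ℝ) : ℝ :=
  RCLike.re (A ^ t).trace

lemma traceRPow_eq_of_charpoly_eq {A B : Matrix n n 𝕜} (hA : A.PosSemidef) (hB : B.PosSemidef)
    (h : A.charpoly = B.charpoly) (t : ℝ) : traceRPow A t = traceRPow B t := by
  have hcharpoly : (A ^ t).charpoly = (B ^ t).charpoly := by
    rw [CFC.rpow_eq_cfc_real hA.nonneg, CFC.rpow_eq_cfc_real hB.nonneg, hA.1.charpoly_cfc_eq,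
      hB.1.charpoly_cfc_eq, (hA.1.eigenvalues_eq_eigenvalues_iff hB.1).2 h]
  rw [traceRPow, traceRPow, trace_eq_neg_charpoly_nextCoeff, hcharpoly,
    ← trace_eq_neg_charpoly_nextCoeff]

lemma traceRPow_rpow {A : Matrix n n 𝕜} (hA : A.PosDef) {s : ℝ} (hs : s ≠ 0) (t : ℝ) :
    traceRPow (A ^ s) t = traceRPow A (s * t) := by
  rw [traceRPow, CFC.rpow_rpow A s t hs hA.isStrictlyPositive, traceRPow]

lemma rpow_sub_mul_le {β z x y : ℝ} (hβ : 0 < β) (hβz : β ≤ z) (hx : 0 ≤ x) (hy : 0 ≤ y) :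
    x ^ (z - β) * y ≤ (z - β) / z * x ^ z + β / z * y ^ (z / β) := by
  have hz : 0 < z := hβ.trans_le hβz
  have h := Real.geom_mean_le_arith_mean2_weighted (w₁ := (z - β) / z) (w₂ := β / z)
    (p₁ := x ^ z) (p₂ := y ^ (z / β)) (div_nonneg (sub_nonneg.2 hβz) hz.le) (by positivity)
    (by positivity) (by positivity) (by field_simp; ring)
  rwa [← Real.rpow_mul hx, ← Real.rpow_mul hy, mul_div_cancel₀ _ hz.ne',
    div_mul_div_cancel₀ hβ.ne', div_self hz.ne', Real.rpow_one] at h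

lemma re_trace_rpow_mul_le {A B : Matrix n n 𝕜} (hA : A.PosSemidef) (hB : B.PosSemidef) {β z : ℝ}
    (hβ : 0 < β) (hβz : β ≤ z) :
    z * RCLike.re (A ^ (z - β) * B).trace ≤ (z - β) * traceRPow A z + β * traceRPow B (z / β) := by
  have hz : 0 < z := hβ.trans_le hβz
  have hid : cfc (fun y : ℝ => y) B = B := cfc_id' ℝ B hB.1
  have h := re_trace_cfc_mul_cfc_le hA.1 hB.1 fun x hx y hy =>
    rpow_sub_mul_le hβ hβz (spectrum_nonneg_of_nonneg hA.nonneg hx)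
      (spectrum_nonneg_of_nonneg hB.nonneg hy)
  rw [← CFC.rpow_eq_cfc_real hA.nonneg, ← CFC.rpow_eq_cfc_real hA.nonneg,
    ← CFC.rpow_eq_cfc_real hB.nonneg, hid] at h
  calc z * RCLike.re (A ^ (z - β) * B).trace
      ≤ z * ((z - β) / z * traceRPow A z + β / z * traceRPow B (z / β)) := by gcongr; exact h
    _ = (z - β) * traceRPow A z + β * traceRPow B (z / β) := by field_simp

lemma traceRPow_le_traceRPow {A B : Matrix n n 𝕜} (hA : A.PosSemidef) (hAB : A ≤ B) {p : ℝ}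
    (hp : 1 ≤ p) : traceRPow A p ≤ traceRPow B p := by
  have hB : B.PosSemidef := (hA.nonneg.trans hAB).posSemidef
  have hyoung := re_trace_rpow_mul_le hA hB one_pos hp
  have hmono : traceRPow A p ≤ RCLike.re (A ^ (p - 1) * B).trace := by
    have h := re_trace_mul_nonneg (posSemidef_rpow A (p - 1)) (sub_nonneg.2 hAB).posSemidef
    rw [mul_sub, Matrix.trace_sub, map_sub, sub_nonneg] at h
    have hpow : A ^ p = A ^ (p - 1) * A := by
      simpa only [sub_add_cancel, CFC.rpow_one A hA.nonneg] using
        rpow_add_of_exponent_nonneg A (sub_nonneg.2 hp) zero_le_one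
    rwa [traceRPow, hpow]
  rw [div_one, one_mul] at hyoung
  linarith [mul_le_mul_of_nonneg_left hmono (zero_le_one.trans hp)]

lemma trace_rpow_mul_conjSqrt (A B : Matrix n n 𝕜) {s : ℝ} (hs : 0 ≤ s) :
    (A ^ s * conjSqrt A B).trace = (A ^ (s + 1) * B).trace := by
  have hpow : CFC.sqrt A * A ^ s * CFC.sqrt A = A ^ (s + 1) := by
    rw [CFC.sqrt_eq_rpow, ← rpow_add_of_exponent_nonneg A (by norm_num) hs,
      ← rpow_add_of_exponent_nonneg A (by positivity) (by norm_num)]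
    ring_nf
  rw [← hpow, CFC.conjSqrt_apply, ← mul_assoc, Matrix.trace_mul_comm]
  simp only [mul_assoc]

lemma two_mul_traceRPow_le (A : Matrix n n 𝕜) {Y : Matrix n n 𝕜} (hY : Y.PosDef) {β z : ℝ}
    (hβ : 0 ≤ β) (hβz : β ≤ z) :
    2 * traceRPow A z ≤
      RCLike.re (A ^ (z + β) * Y⁻¹).trace + RCLike.re (A ^ (z - β) * Y).trace := by
  set K := A ^ β
  set L := A ^ (z - β)
  have hz : 0 ≤ z := hβ.trans hβz
  have hLK : L * K = A ^ z := by
    rw [← rpow_add_of_exponent_nonneg A (sub_nonneg.2 hβz) hβ, sub_add_cancel]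
  have hKLK : K * (L * K) = A ^ (z + β) := by
    rw [hLK, ← rpow_add_of_exponent_nonneg A hβ hz, add_comm]
  have hdet : IsUnit Y.det := Y.isUnit_iff_isUnit_det.1 hY.isUnit
  have hexpand : (K - Y) * Y⁻¹ * (K - Y) = K * Y⁻¹ * K - K - K + Y := by
    simp only [sub_mul, mul_sub, mul_assoc, Matrix.nonsing_inv_mul _ hdet,
      Matrix.mul_nonsing_inv_cancel_left _ _ hdet, mul_one]
    abel
  have hsq : ((K - Y) * Y⁻¹ * (K - Y)).PosSemidef := by
    have hherm : (K - Y)ᴴ = K - Y := ((posSemidef_rpow A β).1.sub hY.1).eq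
    simpa only [hherm] using hY.inv.posSemidef.mul_mul_conjTranspose_same (K - Y)
  have hnonneg := re_trace_mul_nonneg (posSemidef_rpow A (z - β)) hsq
  have hcycle : (L * (K * Y⁻¹ * K)).trace = (A ^ (z + β) * Y⁻¹).trace := by
    rw [← hKLK, ← mul_assoc, Matrix.trace_mul_comm]
    simp only [mul_assoc]
  rw [hexpand, mul_add, mul_sub, mul_sub, Matrix.trace_add, Matrix.trace_sub, Matrix.trace_sub,
    hcycle, hLK] at hnonneg
  simp only [map_add, map_sub] at hnonneg
  rw [traceRPow]
  linarith

lemma traceRPow_conjSqrt_le_of_posDef {X Y : Matrix n n 𝕜} (hX : X.PosSemidef) (hY : Y.PosDef)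
    {α z : ℝ} (hα0 : 0 < α) (hα1 : α < 1) (hαz : α ≤ z) (hαz' : 1 - α ≤ z) :
    traceRPow (conjSqrt Y X) z ≤ α * traceRPow X (z / α) + (1 - α) * traceRPow Y (z / (1 - α)) := by
  set M := conjSqrt Y X
  -- `N` has the spectrum of `X`, and trading `N` for `Y⁻¹` turns the two Young inequalities below
  -- into bounds on the two terms of the AM–GM inequality.
  set N := conjSqrt M Y⁻¹
  have hM : M.PosSemidef := posSemidef_conjSqrt Y hX
  have hN : N.PosSemidef := posSemidef_conjSqrt M hY.inv.posSemidef
  have hNX : N.charpoly = X.charpoly := by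
    rw [charpoly_conjSqrt_comm hM hY.inv.posSemidef, conjSqrt_inv_conjSqrt X hY]
  have hyoungN := re_trace_rpow_mul_le hM hN hα0 hαz
  have hyoungY := re_trace_rpow_mul_le hM hY.posSemidef (sub_pos.2 hα1) hαz'
  have hamgm := two_mul_traceRPow_le M hY (sub_nonneg.2 hα1.le) hαz'
  rw [trace_rpow_mul_conjSqrt M _ (sub_nonneg.2 hαz), traceRPow_eq_of_charpoly_eq hN hX hNX,
    sub_add_eq_add_sub, add_sub_assoc] at hyoungN
  linarith [mul_le_mul_of_nonneg_left hamgm (hα0.le.trans hαz)]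

end TraceInequalities

section Limits

variable {n : Type*} [DecidableEq n]

lemma posDef_add_smul_one {A : Matrix n n ℂ} (hA : A.PosSemidef) {ε : ℝ} (hε : 0 < ε) :
    (A + ε • (1 : Matrix n n ℂ)).PosDef :=
  PosDef.posSemidef_add hA (PosDef.one.smul hε)

lemma tendsto_add_smul_one {A : Matrix n n ℂ} (hA : A.PosSemidef) :
    Tendsto (fun ε : ℝ => A + ε • (1 : Matrix n n ℂ)) (𝓝[>] 0) (𝓝[Set.Ici 0] A) := by
  refine tendsto_nhdsWithin_iff.2 ⟨?_, ?_⟩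
  · have h : Continuous fun ε : ℝ => A + ε • (1 : Matrix n n ℂ) := by fun_prop
    simpa only [zero_smul, add_zero] using (h.tendsto 0).mono_left nhdsWithin_le_nhds
  · filter_upwards [self_mem_nhdsWithin] with ε hε
    exact (posDef_add_smul_one hA hε).posSemidef.nonneg

variable [Fintype n]

open scoped Matrix.Norms.L2Operator in
lemma continuousOn_rpow {t : ℝ} (ht : 0 ≤ t) :
    ContinuousOn (fun A : Matrix n n ℂ => A ^ t) (Set.Ici 0) := by
  have h : ContinuousOn (fun A : Matrix n n ℂ => cfc (fun x : ℝ => x ^ t) A) (Set.Ici 0) :=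
    continuousOn_id.cfc_of_mem_nhdsSet (s := Set.univ) (fun x => x ^ t) (fun _ _ => univ_mem)
      (fun A (hA : 0 ≤ A) => IsSelfAdjoint.of_nonneg hA)
      (Real.continuous_rpow_const ht).continuousOn
  exact h.congr fun A hA => CFC.rpow_eq_cfc_real (ha := hA)

lemma continuousOn_traceRPow {t : ℝ} (ht : 0 ≤ t) :
    ContinuousOn (fun A : Matrix n n ℂ => traceRPow A t) (Set.Ici 0) :=
  (RCLike.continuous_re.comp continuous_id.matrix_trace).comp_continuousOn (continuousOn_rpow ht)

lemma continuousOn_traceRPow_conjSqrt {t : ℝ} (ht : 0 ≤ t) :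
    ContinuousOn (fun p : Matrix n n ℂ × Matrix n n ℂ => traceRPow (conjSqrt p.1 p.2) t)
      (Set.Ici 0 ×ˢ Set.Ici 0) := by
  have hsqrt : ContinuousOn (fun p : Matrix n n ℂ × Matrix n n ℂ => CFC.sqrt p.1)
      (Set.Ici 0 ×ˢ Set.Ici 0) := by
    simp only [CFC.sqrt_eq_rpow]
    exact (continuousOn_rpow (by norm_num)).comp continuousOn_fst fun p hp => hp.1
  refine (continuousOn_traceRPow ht).comp ((hsqrt.mul continuousOn_snd).mul hsqrt) fun p hp => ?_
  exact (posSemidef_conjSqrt p.1 (Matrix.nonneg_iff_posSemidef.1 hp.2)).nonneg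

lemma tendsto_traceRPow_conjSqrt {ι : Type*} {l : Filter ι} {A B : Matrix n n ℂ}
    {a b : ι → Matrix n n ℂ} (hA : A.PosSemidef) (hB : B.PosSemidef)
    (ha : Tendsto a l (𝓝[Set.Ici 0] A)) (hb : Tendsto b l (𝓝[Set.Ici 0] B)) {t : ℝ} (ht : 0 ≤ t) :
    Tendsto (fun i => traceRPow (conjSqrt (b i) (a i)) t) l (𝓝 (traceRPow (conjSqrt B A) t)) := by
  have hba : Tendsto (fun i => (b i, a i)) l (𝓝[Set.Ici 0 ×ˢ Set.Ici 0] (B, A)) := by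
    rw [nhdsWithin_prod_eq]
    exact hb.prodMk ha
  have hcont := continuousOn_traceRPow_conjSqrt ht (B, A) ⟨hB.nonneg, hA.nonneg⟩
  simpa only [Function.comp_def] using hcont.tendsto.comp hba

lemma traceRPow_conjSqrt_le {X Y : Matrix n n ℂ} (hX : X.PosSemidef) (hY : Y.PosSemidef)
    {α z : ℝ} (hα0 : 0 < α) (hα1 : α < 1) (hαz : α ≤ z) (hαz' : 1 - α ≤ z) :
    traceRPow (conjSqrt Y X) z ≤ α * traceRPow X (z / α) + (1 - α) * traceRPow Y (z / (1 - α)) := by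
  have hz : 0 ≤ z := hα0.le.trans hαz
  have hlim := tendsto_add_smul_one hY
  have hlhs : Tendsto (fun ε : ℝ => traceRPow (conjSqrt (Y + ε • (1 : Matrix n n ℂ)) X) z) (𝓝[>] 0)
      (𝓝 (traceRPow (conjSqrt Y X) z)) :=
    tendsto_traceRPow_conjSqrt hX hY
      (tendsto_nhdsWithin_iff.2 ⟨tendsto_const_nhds, .of_forall fun _ => hX.nonneg⟩) hlim hz
  have hrhs := ((continuousOn_traceRPow (div_nonneg hz (sub_nonneg.2 hα1.le)) Y
    hY.nonneg).tendsto.comp hlim).const_mul (1 - α) |>.const_add (α * traceRPow X (z / α))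
  refine le_of_tendsto_of_tendsto hlhs hrhs ?_
  filter_upwards [self_mem_nhdsWithin] with ε hε
  exact traceRPow_conjSqrt_le_of_posDef hX (posDef_add_smul_one hY hε) hα0 hα1 hαz hαz'

end Limits

section Variational

variable {n 𝕜 : Type*} [Fintype n] [DecidableEq n] [RCLike 𝕜]

/-- The functional `α Tr (a^{1/2} A a^{1/2})^{z/α} + (1 - α) Tr (a^{-1/2} B a^{-1/2})^{z/(1-α)}`
minimised over positive definite `a` in the variational formula, with `A = ρ^{α/z}` and
`B = σ^{(1-α)/z}`. -/
noncomputable def variationalObjective (α z : ℝ) (A B a : Matrix n n 𝕜) : ℝ :=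
  α * traceRPow (conjSqrt a A) (z / α) + (1 - α) * traceRPow (conjSqrt a⁻¹ B) (z / (1 - α))

lemma variationalObjective_mono {α z : ℝ} (hα0 : 0 < α) (hα1 : α < 1) (hαz : α ≤ z)
    (hαz' : 1 - α ≤ z) {A A' B B' : Matrix n n 𝕜} (hA : A.PosSemidef) (hB : B.PosSemidef)
    (hAA' : A ≤ A') (hBB' : B ≤ B') (a : Matrix n n 𝕜) :
    variationalObjective α z A B a ≤ variationalObjective α z A' B' a := by
  have hα1' : 0 < 1 - α := sub_pos.2 hα1
  unfold variationalObjective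
  gcongr
  · exact traceRPow_le_traceRPow (posSemidef_conjSqrt a hA) (CFC.conjSqrt_le_conjSqrt hAA')
      ((one_le_div hα0).2 hαz)
  · exact traceRPow_le_traceRPow (posSemidef_conjSqrt a⁻¹ hB) (CFC.conjSqrt_le_conjSqrt hBB')
      ((one_le_div hα1').2 hαz')

lemma exists_variationalObjective_eq {α : ℝ} (hα0 : α ≠ 0) (hα1 : α ≠ 1) (z : ℝ)
    {A B : Matrix n n 𝕜} (hA : A.PosDef) (hB : B.PosDef) :
    ∃ a : Matrix n n 𝕜, a.PosDef ∧
      variationalObjective α z A B a = traceRPow (conjSqrt B A) z := by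
  set M := conjSqrt B A
  have hM : M.PosDef := posDef_conjSqrt hB hA
  set a := conjSqrt B (M ^ (α - 1))
  have ha : a.PosDef := posDef_conjSqrt hB (posDef_rpow hM _)
  have hA' : (conjSqrt a A).charpoly = (M ^ α).charpoly := by
    have hpow : M * M ^ (α - 1) = M ^ α := by
      simpa only [CFC.rpow_one M hM.posSemidef.nonneg, add_sub_cancel] using
        (CFC.rpow_add (x := 1) (y := α - 1) hM.isUnit).symm
    rw [charpoly_conjSqrt ha.posSemidef, charpoly_mul_conjSqrt, hpow]
  have hB' : (conjSqrt a⁻¹ B).charpoly = (M ^ (1 - α)).charpoly := by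
    rw [charpoly_conjSqrt_comm ha.inv.posSemidef hB.posSemidef, inv_conjSqrt hB,
      inv_rpow_eq_rpow_neg hM, conjSqrt_conjSqrt_inv _ hB, neg_sub]
  refine ⟨a, ha, ?_⟩
  rw [variationalObjective,
    traceRPow_eq_of_charpoly_eq (posSemidef_conjSqrt a hA.posSemidef) (posSemidef_rpow M α) hA',
    traceRPow_eq_of_charpoly_eq (posSemidef_conjSqrt a⁻¹ hB.posSemidef)
      (posSemidef_rpow M (1 - α)) hB', traceRPow_rpow hM hα0,
    traceRPow_rpow hM (sub_ne_zero.2 hα1.symm), mul_div_cancel₀ z hα0,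
    mul_div_cancel₀ z (sub_ne_zero.2 hα1.symm)]
  ring

lemma le_variationalObjective {α z : ℝ} (hα0 : 0 < α) (hα1 : α < 1) (hαz : α ≤ z)
    (hαz' : 1 - α ≤ z) {A B a : Matrix n n ℂ} (hA : A.PosSemidef) (hB : B.PosSemidef)
    (ha : a.PosDef) :
    traceRPow (conjSqrt B A) z ≤ variationalObjective α z A B a := by
  set X := conjSqrt a A
  set Y := conjSqrt a⁻¹ B
  have hX : X.PosSemidef := posSemidef_conjSqrt a hA
  have hY : Y.PosSemidef := posSemidef_conjSqrt a⁻¹ hB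
  have hchar : (conjSqrt B A).charpoly = (conjSqrt Y X).charpoly := by
    rw [charpoly_conjSqrt hB, charpoly_conjSqrt hY, ← charpoly_mul_conjSqrt,
      conjSqrt_conjSqrt_inv B ha]
  rw [traceRPow_eq_of_charpoly_eq (posSemidef_conjSqrt B hA) (posSemidef_conjSqrt Y hX) hchar]
  exact traceRPow_conjSqrt_le hX hY hα0 hα1 hαz hαz'

theorem traceRPow_conjSqrt_eq_iInf {α z : ℝ} (hα0 : 0 < α) (hα1 : α < 1) (hαz : α ≤ z)
    (hαz' : 1 - α ≤ z) {A B : Matrix n n ℂ} (hA : A.PosSemidef) (hB : B.PosSemidef) :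
    traceRPow (conjSqrt B A) z =
      ⨅ a : {a : Matrix n n ℂ // a.PosDef}, variationalObjective α z A B a := by
  have : Nonempty {a : Matrix n n ℂ // a.PosDef} := ⟨1, PosDef.one⟩
  have hlower (a : {a : Matrix n n ℂ // a.PosDef}) :=
    le_variationalObjective hα0 hα1 hαz hαz' hA hB a.2
  refine le_antisymm (le_ciInf hlower) (ge_of_tendsto (tendsto_traceRPow_conjSqrt hA hB
    (tendsto_add_smul_one hA) (tendsto_add_smul_one hB) (hα0.le.trans hαz)) ?_)
  filter_upwards [self_mem_nhdsWithin] with ε hε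
  have hle (C : Matrix n n ℂ) : C ≤ C + ε • (1 : Matrix n n ℂ) :=
    le_add_of_nonneg_right (PosSemidef.one.smul (le_of_lt hε)).nonneg
  obtain ⟨a, ha, hvalue⟩ := exists_variationalObjective_eq hα0.ne' hα1.ne z
    (posDef_add_smul_one hA hε) (posDef_add_smul_one hB hε)
  calc ⨅ a : {a : Matrix n n ℂ // a.PosDef}, variationalObjective α z A B a
      ≤ variationalObjective α z A B a := ciInf_le ⟨_, Set.forall_mem_range.2 hlower⟩ ⟨a, ha⟩
    _ ≤ _ := variationalObjective_mono hα0 hα1 hαz hαz' hA hB (hle A) (hle B) a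
    _ = _ := hvalue

end Variational

section Mpow

variable {n : Type*} [Fintype n] [DecidableEq n]

lemma mpow_eq_rpow {A : Matrix n n ℂ} (hA : A.PosSemidef) (t : ℝ) : mpow A t = A ^ t := by
  rw [CFC.rpow_eq_cfc_real hA.nonneg, hA.1.cfc_eq, mpow, dif_pos hA.1, Matrix.IsHermitian.cfc,
    Unitary.conjStarAlgAut_apply]
  rfl

lemma re_trace_mpow {A : Matrix n n ℂ} (hA : A.PosSemidef) (t : ℝ) :
    ((mpow A t).trace).re = traceRPow A t := by
  rw [mpow_eq_rpow hA, traceRPow, RCLike.re_eq_complex_re]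

lemma mpow_one_half {A : Matrix n n ℂ} (hA : A.PosSemidef) : mpow A (1 / 2) = CFC.sqrt A := by
  rw [mpow_eq_rpow hA, CFC.sqrt_eq_rpow]

lemma Qaz_eq_traceRPow {α z : ℝ} (hα1 : α < 1) (hz : 0 < z) {ρ σ : Matrix n n ℂ}
    (hρ : ρ.PosSemidef) (hσ : σ.PosSemidef) :
    Qaz α z ρ σ = traceRPow (conjSqrt (σ ^ ((1 - α) / z)) (ρ ^ (α / z))) z := by
  have hsqrt : mpow σ ((1 - α) / (2 * z)) = CFC.sqrt (σ ^ ((1 - α) / z)) := by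
    rw [mpow_eq_rpow hσ, CFC.sqrt_eq_rpow, CFC.rpow_rpow_of_exponent_nonneg σ _ _
      (div_nonneg (sub_nonneg.2 hα1.le) hz.le) (by norm_num) hσ.nonneg, mul_comm 2 z, ← div_div,
      div_eq_mul_one_div (_ / z)]
  rw [Qaz, hsqrt, mpow_eq_rpow hρ, ← CFC.conjSqrt_apply,
    re_trace_mpow (posSemidef_conjSqrt _ (posSemidef_rpow ρ _))]

lemma variationalObjective_eq_mpow (α z : ℝ) {A B a : Matrix n n ℂ} (hA : A.PosSemidef)
    (hB : B.PosSemidef) (ha : a.PosSemidef) :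
    variationalObjective α z A B a =
      α * ((mpow (mpow a (1 / 2) * A * mpow a (1 / 2)) (z / α)).trace).re
        + (1 - α) * ((mpow ((mpow a (1 / 2))⁻¹ * B * (mpow a (1 / 2))⁻¹)
            (z / (1 - α))).trace).re := by
  rw [mpow_one_half ha, ha.inv_sqrt, ← CFC.conjSqrt_apply, ← CFC.conjSqrt_apply,
    re_trace_mpow (posSemidef_conjSqrt a hA), re_trace_mpow (posSemidef_conjSqrt a⁻¹ hB),
    variationalObjective]

theorem Qaz_variational_eq_general (α z : ℝ) (hα0 : 0 < α) (hα1 : α < 1)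
    (hz : max α (1 - α) ≤ z) (ρ σ : Matrix n n ℂ) (hρ : ρ.PosSemidef) (hσ : σ.PosSemidef) :
    Qaz α z ρ σ =
      ⨅ a : {a : Matrix n n ℂ // a.PosDef},
        α * ((mpow (mpow a.1 (1 / 2) * mpow ρ (α / z) * mpow a.1 (1 / 2)) (z / α)).trace).re
          + (1 - α) * ((mpow ((mpow a.1 (1 / 2))⁻¹ * mpow σ ((1 - α) / z)
              * (mpow a.1 (1 / 2))⁻¹) (z / (1 - α))).trace).re := by
  have hz0 : 0 < z := hα0.trans_le ((le_max_left α (1 - α)).trans hz)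
  have hA := posSemidef_rpow ρ (α / z)
  have hB := posSemidef_rpow σ ((1 - α) / z)
  rw [Qaz_eq_traceRPow hα1 hz0 hρ hσ, traceRPow_conjSqrt_eq_iInf hα0 hα1
    ((le_max_left _ _).trans hz) ((le_max_right _ _).trans hz) hA hB]
  refine iInf_congr fun a => ?_
  rw [variationalObjective_eq_mpow α z hA hB a.2.posSemidef, mpow_eq_rpow hρ, mpow_eq_rpow hσ]

end Mpow

/-- Variational expression for `Q_{α,z}` for `0 < α < 1`, `z ≥ max{α, 1−α}`:
`Q_{α,z}(ρ‖σ)` is the infimum over positive definite `a` of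
`α Tr((a^{1/2} ρ^{α/z} a^{1/2})^{z/α}) + (1−α) Tr((a^{−1/2} σ^{(1−α)/z} a^{−1/2})^{z/(1−α)})`. -/
theorem Qaz_variational_eq (n : ℕ) (α z : ℝ) (hα0 : 0 < α) (hα1 : α < 1)
    (hz : max α (1 - α) ≤ z)
    (ρ σ : Matrix (Fin n) (Fin n) ℂ) (hρ : ρ.PosSemidef) (hσ : σ.PosSemidef) :
    Qaz α z ρ σ =
      ⨅ a : {a : Matrix (Fin n) (Fin n) ℂ // a.PosDef},
        α * ((mpow (mpow (a : Matrix (Fin n) (Fin n) ℂ) (1 / 2) * mpow ρ (α / z)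
              * mpow (a : Matrix (Fin n) (Fin n) ℂ) (1 / 2)) (z / α)).trace).re
          + (1 - α) * ((mpow ((mpow (a : Matrix (Fin n) (Fin n) ℂ) (1 / 2))⁻¹
              * mpow σ ((1 - α) / z)
              * (mpow (a : Matrix (Fin n) (Fin n) ℂ) (1 / 2))⁻¹) (z / (1 - α))).trace).re := by
  exact Qaz_variational_eq_general α z hα0 hα1 hz ρ σ hρ hσ
end
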